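/- Let A, B, C be noncollinear points in ℝ² and let P be a point in the interior of the convex hull of {A, B, C}. Then there exist sequences of points Aₙ, Bₙ, Cₙ (n = 1, 2, …), each belonging to ⋃_{j ≥ 0} Tʲ({A, B, C, P}), such that for every n the point P lies in the interior of the convex hull of {Aₙ, Bₙ, Cₙ}, and Aₙ → P, Bₙ → P, Cₙ → P as n → ∞. -/

import Mathlib

open Set Filter

noncomputable section

/-- The line through two points in the plane `ℝ × ℝ`. -/
def line (a b : ℝ × ℝ) : AffineSubspace ℝ (ℝ × ℝ) := affineSpan ℝ {a, b}

/-- The intersection operation `T`: the set of all intersection points of pairs of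
distinct lines through pairs of distinct points of `S`. -/
def interT (S : Set (ℝ × ℝ)) : Set (ℝ × ℝ) :=
  {x | ∃ a ∈ S, ∃ b ∈ S, ∃ c ∈ S, ∃ d ∈ S,
    a ≠ b ∧ c ≠ d ∧ line a b ≠ line c d ∧ x ∈ line a b ∧ x ∈ line c d}

/-!
Write `P` as the barycentre of `A, B, C` with positive masses. Each foot of a cevian through `P` is
the intersection of two lines spanned by `A, B, C, P`. Giving every foot the total mass of the side
on which it lies again yields the barycentre `P`: if `m` is the mass at `A`, and `m'` the mass at
the foot `A'` opposite to `A`, then `m' (A' - P) = -m (A - P)`. So under iteration the products of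
the masses with the vectors from `P` only change sign, while the least mass at least doubles; hence
the vertices tend to `P`.
-/

section AffineIndependent

variable {k V Q ι : Type*} [DivisionRing k] [AddCommGroup V] [Module k V] [AddTorsor V Q]
  [Finite ι] {p q : ι → Q}

theorem affineIndependent_of_forall_mem_affineSpan_range (hp : AffineIndependent k p)
    (hpq : ∀ i, p i ∈ affineSpan k (range q)) : AffineIndependent k q := by
  have := Fintype.ofFinite ι
  cases isEmpty_or_nonempty ι
  · exact affineIndependent_of_subsingleton k q
  have hcard : Fintype.card ι = (Fintype.card ι - 1) + 1 :=
    (Nat.succ_pred_eq_of_pos Fintype.card_pos).symm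
  have hspan : affineSpan k (range p) ≤ affineSpan k (range q) :=
    affineSpan_le.2 (range_subset_iff.2 hpq)
  have hdir : vectorSpan k (range p) ≤ vectorSpan k (range q) := by
    simpa only [direction_affineSpan] using AffineSubspace.direction_le hspan
  rw [affineIndependent_iff_le_finrank_vectorSpan k _ hcard] at hp ⊢
  exact hp.trans (Submodule.finrank_mono hdir)

end AffineIndependent

section Barycenter

variable {𝕜 E ι : Type*} [Field 𝕜] [LinearOrder 𝕜] [AddCommGroup E] [Module 𝕜 E] [Fintype ι]

/-- `P` is the barycentre of the points `v i` with positive masses `m i`. The masses are not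
normalized: this keeps the masses of iterated cevian feet free of denominators. -/
structure IsPosBarycenter (m : ι → 𝕜) (v : ι → E) (P : E) : Prop where
  pos : ∀ i, 0 < m i
  sum_smul_sub : ∑ i, m i • (v i - P) = 0

/-- The total mass of the facet opposite to the vertex `i`. -/
def oppositeMass [DecidableEq ι] (m : ι → 𝕜) (i : ι) : 𝕜 := ∑ j ∈ Finset.univ.erase i, m j

/-- The barycentre of the facet opposite to the vertex `i`, which is the point where the cevian from
`v i` through the barycentre of all vertices meets that facet. -/
def cevianFoot [DecidableEq ι] (m : ι → 𝕜) (v : ι → E) (i : ι) : E :=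
  (Finset.univ.erase i).centerMass m v

/-- The vertices obtained by repeatedly replacing every vertex by its cevian foot and its mass by
the mass of the opposite facet. -/
def iteratedCevianFoot [DecidableEq ι] (m : ι → 𝕜) (v : ι → E) : ℕ → ι → E
  | 0 => v
  | n + 1 => cevianFoot (oppositeMass^[n] m) (iteratedCevianFoot m v n)

namespace IsPosBarycenter

variable {m : ι → 𝕜} {v : ι → E} {P : E}

theorem sum_erase_smul_sub [DecidableEq ι] (h : IsPosBarycenter m v P) (i : ι) :
    ∑ j ∈ Finset.univ.erase i, m j • (v j - P) = -(m i • (v i - P)) := by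
  rw [eq_neg_iff_add_eq_zero, Finset.sum_erase_add _ _ (Finset.mem_univ i), h.sum_smul_sub]

theorem mem_of_forall_ne (h : IsPosBarycenter m v P) {L : AffineSubspace 𝕜 E} {i : ι}
    (hP : P ∈ L) (hL : ∀ j ≠ i, v j ∈ L) : v i ∈ L := by
  classical
  have hdir : m i • (v i - P) ∈ L.direction := by
    rw [← neg_mem_iff, ← h.sum_erase_smul_sub]
    exact sum_mem fun j hj ↦ L.direction.smul_mem _
      (L.vsub_mem_direction (hL j (Finset.ne_of_mem_erase hj)) hP)
  exact (AffineSubspace.vsub_right_mem_direction_iff_mem hP _).1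
    ((L.direction.smul_mem_iff (h.pos i).ne').1 hdir)

variable [IsStrictOrderedRing 𝕜]

theorem centerMass_eq [Nonempty ι] (h : IsPosBarycenter m v P) :
    Finset.univ.centerMass m v = P := by
  have hsum : 0 < ∑ i, m i := Finset.sum_pos (fun i _ ↦ h.pos i) Finset.univ_nonempty
  have hmoment : ∑ i, m i • v i = (∑ i, m i) • P := by
    simpa only [smul_sub, Finset.sum_sub_distrib, ← Finset.sum_smul, sub_eq_zero]
      using h.sum_smul_sub
  rw [Finset.centerMass, hmoment, inv_smul_smul₀ hsum.ne']

theorem mem_of_forall_mem [Nonempty ι] (h : IsPosBarycenter m v P) {L : AffineSubspace 𝕜 E}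
    (hL : ∀ i, v i ∈ L) : P ∈ L := by
  rw [← h.centerMass_eq]
  exact L.convex.centerMass_mem (fun i _ ↦ (h.pos i).le)
    (Finset.sum_pos (fun i _ ↦ h.pos i) Finset.univ_nonempty) fun i _ ↦ hL i

variable [DecidableEq ι] [Nontrivial ι]

theorem oppositeMass_pos (h : IsPosBarycenter m v P) (i : ι) : 0 < oppositeMass m i :=
  Finset.sum_pos (fun j _ ↦ h.pos j) (Finset.univ_nontrivial.erase_nonempty)

theorem oppositeMass_smul_cevianFoot_sub (h : IsPosBarycenter m v P) (i : ι) :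
    oppositeMass m i • (cevianFoot m v i - P) = -(m i • (v i - P)) :=
  calc oppositeMass m i • (cevianFoot m v i - P)
      = ∑ j ∈ Finset.univ.erase i, m j • (v j - P) := by
        simp only [cevianFoot, Finset.centerMass, smul_sub, Finset.sum_sub_distrib,
          ← Finset.sum_smul]
        rw [← oppositeMass, smul_inv_smul₀ (h.oppositeMass_pos i).ne']
    _ = -(m i • (v i - P)) := h.sum_erase_smul_sub i

protected theorem cevianFoot (h : IsPosBarycenter m v P) :
    IsPosBarycenter (oppositeMass m) (cevianFoot m v) P where
  pos := h.oppositeMass_pos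
  sum_smul_sub := by
    simp only [h.oppositeMass_smul_cevianFoot_sub, Finset.sum_neg_distrib, h.sum_smul_sub, neg_zero]

theorem cevianFoot_eq_lineMap (h : IsPosBarycenter m v P) (i : ι) :
    cevianFoot m v i = AffineMap.lineMap P (v i) (-(m i / oppositeMass m i)) := by
  rw [AffineMap.lineMap_apply_module', ← sub_eq_iff_eq_add, neg_smul, div_eq_inv_mul, mul_smul,
    ← smul_neg, eq_inv_smul_iff₀ (h.oppositeMass_pos i).ne', h.oppositeMass_smul_cevianFoot_sub]

theorem eq_lineMap_cevianFoot (h : IsPosBarycenter m v P) (i : ι) :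
    v i = AffineMap.lineMap P (cevianFoot m v i) (-(oppositeMass m i / m i)) := by
  rw [AffineMap.lineMap_apply_module', ← sub_eq_iff_eq_add, neg_smul, div_eq_inv_mul, mul_smul,
    h.oppositeMass_smul_cevianFoot_sub, smul_neg, neg_neg, inv_smul_smul₀ (h.pos i).ne']

theorem cevianFoot_mem_of_forall_ne (h : IsPosBarycenter m v P) {L : AffineSubspace 𝕜 E} {i : ι}
    (hL : ∀ j ≠ i, v j ∈ L) : cevianFoot m v i ∈ L :=
  L.convex.centerMass_mem (fun j _ ↦ (h.pos j).le) (h.oppositeMass_pos i)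
    fun j hj ↦ hL j (Finset.ne_of_mem_erase hj)

theorem affineIndependent_cevianFoot (h : IsPosBarycenter m v P) (hv : AffineIndependent 𝕜 v) :
    AffineIndependent 𝕜 (cevianFoot m v) := by
  refine affineIndependent_of_forall_mem_affineSpan_range hv fun i ↦ ?_
  have hfoot (j : ι) :
      cevianFoot m v j ∈ affineSpan 𝕜 (range (cevianFoot m v)) :=
    mem_affineSpan 𝕜 (mem_range_self j)
  rw [h.eq_lineMap_cevianFoot i]
  exact AffineMap.lineMap_mem _ (h.cevianFoot.mem_of_forall_mem hfoot) (hfoot i)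

protected theorem iteratedCevianFoot (h : IsPosBarycenter m v P) (n : ℕ) :
    IsPosBarycenter (oppositeMass^[n] m) (iteratedCevianFoot m v n) P := by
  induction n with
  | zero => exact h
  | succ n ih => exact Function.iterate_succ_apply' oppositeMass n m ▸ ih.cevianFoot

theorem affineIndependent_iteratedCevianFoot (h : IsPosBarycenter m v P)
    (hv : AffineIndependent 𝕜 v) (n : ℕ) :
    AffineIndependent 𝕜 (iteratedCevianFoot m v n) := by
  induction n with
  | zero => exact hv
  | succ n ih => exact (h.iteratedCevianFoot n).affineIndependent_cevianFoot ih

theorem oppositeMass_iterate_smul_iteratedCevianFoot_sub (h : IsPosBarycenter m v P) (n : ℕ)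
    (i : ι) : (oppositeMass^[n] m) i • (iteratedCevianFoot m v n i - P) =
      (-1 : 𝕜) ^ n • m i • (v i - P) := by
  induction n with
  | zero => simp [iteratedCevianFoot]
  | succ n ih =>
    rw [Function.iterate_succ_apply', iteratedCevianFoot,
      (h.iteratedCevianFoot n).oppositeMass_smul_cevianFoot_sub, ih, pow_succ', neg_one_mul,
      neg_smul]

end IsPosBarycenter

end Barycenter

section Growth

variable {𝕜 ι : Type*} [Field 𝕜] [LinearOrder 𝕜] [IsStrictOrderedRing 𝕜] [Fintype ι]
  [DecidableEq ι] {m : ι → 𝕜}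

theorem card_sub_one_nsmul_le_oppositeMass {a : 𝕜} (ha : ∀ i, a ≤ m i) (i : ι) :
    (Fintype.card ι - 1) • a ≤ oppositeMass m i := by
  simpa only [oppositeMass, Finset.card_erase_of_mem (Finset.mem_univ i), Finset.card_univ] using
    Finset.card_nsmul_le_sum (Finset.univ.erase i) m a fun j _ ↦ ha j

theorem card_sub_one_pow_nsmul_le_oppositeMass_iterate {a : 𝕜} (ha : ∀ i, a ≤ m i) (n : ℕ)
    (i : ι) : (Fintype.card ι - 1) ^ n • a ≤ (oppositeMass^[n] m) i := by
  induction n generalizing i with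
  | zero => simpa using ha i
  | succ n ih =>
    rw [pow_succ', mul_nsmul', Function.iterate_succ_apply']
    exact card_sub_one_nsmul_le_oppositeMass ih i

theorem tendsto_oppositeMass_iterate_atTop [Archimedean 𝕜] (hι : 2 < Fintype.card ι)
    (hm : ∀ i, 0 < m i) (i : ι) : Tendsto (fun n ↦ (oppositeMass^[n] m) i) atTop atTop := by
  have : Nonempty ι := ⟨i⟩
  obtain ⟨i₀, hi₀⟩ := Finite.exists_min m
  refine tendsto_atTop_mono
    (fun n ↦ card_sub_one_pow_nsmul_le_oppositeMass_iterate hi₀ n i) ?_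
  exact (tendsto_pow_atTop_atTop_of_one_lt (by lia)).atTop_nsmul_const (hm i₀)

end Growth

theorem IsPosBarycenter.tendsto_iteratedCevianFoot {E ι : Type*} [AddCommGroup E] [Module ℝ E]
    [TopologicalSpace E] [ContinuousAdd E] [ContinuousSMul ℝ E] [Fintype ι] [DecidableEq ι]
    {m : ι → ℝ} {v : ι → E} {P : E} (hι : 2 < Fintype.card ι) (h : IsPosBarycenter m v P) (i : ι) :
    Tendsto (fun n ↦ iteratedCevianFoot m v n i) atTop (nhds P) := by
  have : Nontrivial ι := Fintype.one_lt_card_iff_nontrivial.1 (by lia)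
  have hfoot (n : ℕ) : iteratedCevianFoot m v n i =
      ((-1) ^ n * ((oppositeMass^[n] m) i)⁻¹) • m i • (v i - P) + P := by
    rw [← sub_eq_iff_eq_add, mul_comm, mul_smul,
      eq_inv_smul_iff₀ ((h.iteratedCevianFoot n).pos i).ne',
      h.oppositeMass_iterate_smul_iteratedCevianFoot_sub]
  have hcoeff : Tendsto (fun n ↦ (-1) ^ n * ((oppositeMass^[n] m) i)⁻¹) atTop (nhds 0) := by
    refine (tendsto_zero_iff_abs_tendsto_zero _).2 ?_
    simpa [Function.comp_def] using
      (tendsto_oppositeMass_iterate_atTop hι h.pos i).inv_tendsto_atTop.abs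
  simpa only [hfoot, zero_smul, zero_add] using (hcoeff.smul_const (m i • (v i - P))).add_const P

theorem mem_interior_convexHull_range_iff_exists_isPosBarycenter {E ι : Type*}
    [NormedAddCommGroup E] [NormedSpace ℝ E] [FiniteDimensional ℝ E] [Fintype ι] {v : ι → E} {P : E}
    (hv : AffineIndependent ℝ v) (hι : Fintype.card ι = Module.finrank ℝ E + 1) :
    P ∈ interior (convexHull ℝ (range v)) ↔ ∃ m : ι → ℝ, IsPosBarycenter m v P := by
  let b : AffineBasis ι ℝ E := ⟨v, hv, hv.affineSpan_eq_top_iff_card_eq_finrank_add_one.2 hι⟩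
  have : Nonempty ι := b.nonempty
  change P ∈ interior (convexHull ℝ (range b)) ↔ _
  rw [b.interior_convexHull]
  constructor
  · intro hP
    refine ⟨fun i ↦ b.coord i P, hP, ?_⟩
    have hcomb : ∑ i, b.coord i P • v i = P := b.linear_combination_coord_eq_self P
    simp only [smul_sub, Finset.sum_sub_distrib, ← Finset.sum_smul, b.sum_coord_apply_eq_one,
      hcomb, one_smul, sub_self]
  · rintro ⟨m, (hm : IsPosBarycenter m b P)⟩ i
    have hpos : 0 < ∑ j, m j := Finset.sum_pos (fun j _ ↦ hm.pos j) Finset.univ_nonempty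
    have hsum : ∑ j, ((∑ l, m l)⁻¹ • m) j = 1 := by
      simp only [Pi.smul_apply, smul_eq_mul, ← Finset.mul_sum, inv_mul_cancel₀ hpos.ne']
    have hP : Finset.univ.affineCombination ℝ b ((∑ l, m l)⁻¹ • m) = P := by
      rw [affineCombination_eq_centerMass hsum,
        Finset.centerMass_smul_left (hc := inv_ne_zero hpos.ne'), hm.centerMass_eq]
    rw [← hP, b.coord_apply_combination_of_mem (Finset.mem_univ i) hsum]
    exact mul_pos (inv_pos.2 hpos) (hm.pos i)

section Plane

theorem mem_interT_of_not_collinear {S : Set (ℝ × ℝ)} {a b c d x : ℝ × ℝ} (ha : a ∈ S) (hb : b ∈ S)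
    (hc : c ∈ S) (hd : d ∈ S) (habc : ¬ Collinear ℝ {a, b, c}) (hcd : c ≠ d)
    (hab_x : x ∈ line a b) (hcd_x : x ∈ line c d) : x ∈ interT S := by
  refine ⟨a, ha, b, hb, c, hc, d, hd, ne₁₂_of_not_collinear habc, hcd, fun hline ↦ habc ?_,
    hab_x, hcd_x⟩
  have hc_line : c ∈ line a b := hline ▸ left_mem_affineSpan_pair ℝ c d
  exact (collinear_insert_of_mem_affineSpan_pair hc_line).subset (by grind)

namespace IsPosBarycenter

theorem not_collinear_of_ne {𝕜 E : Type*} [Field 𝕜] [LinearOrder 𝕜]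
    [AddCommGroup E] [Module 𝕜 E] {m : Fin 3 → 𝕜} {v : Fin 3 → E} {P : E}
    (h : IsPosBarycenter m v P) (hv : AffineIndependent 𝕜 v) {i j : Fin 3} (hij : i ≠ j) :
    ¬ Collinear 𝕜 {P, v i, v j} := by
  obtain ⟨k, hk⟩ : ∃ k, ∀ l ≠ k, l = i ∨ l = j := by decide +revert
  rw [← affineIndependent_iff_not_collinear_set]
  refine affineIndependent_of_forall_mem_affineSpan_range hv ?_
  set L := affineSpan 𝕜 (range ![P, v i, v j])
  have hmem (l : Fin 3) : ![P, v i, v j] l ∈ L := mem_affineSpan 𝕜 (mem_range_self l)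
  have hL (l : Fin 3) (hl : l ≠ k) : v l ∈ L := by
    rcases hk l hl with rfl | rfl
    exacts [hmem 1, hmem 2]
  intro l
  by_cases hl : l = k
  · exact hl ▸ h.mem_of_forall_ne (hmem 0) hL
  · exact hL l hl

variable {m : Fin 3 → ℝ} {v : Fin 3 → ℝ × ℝ} {P : ℝ × ℝ} {S : Set (ℝ × ℝ)}

theorem mem_interT (h : IsPosBarycenter m v P) (hv : AffineIndependent ℝ v) (hvS : ∀ i, v i ∈ S)
    (hPS : P ∈ S) : P ∈ interT S := by
  have hcol := h.not_collinear_of_ne hv (i := 0) (j := 1) (by decide)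
  exact mem_interT_of_not_collinear hPS (hvS 0) (hvS 1) hPS hcol (ne₁₃_of_not_collinear hcol).symm
    (left_mem_affineSpan_pair ℝ _ _) (right_mem_affineSpan_pair ℝ _ _)

theorem cevianFoot_mem_interT (h : IsPosBarycenter m v P) (hv : AffineIndependent ℝ v)
    (hvS : ∀ i, v i ∈ S) (hPS : P ∈ S) (i : Fin 3) : cevianFoot m v i ∈ interT S := by
  have hside : cevianFoot m v i ∈ line (v (i + 1)) (v (i + 2)) := by
    refine h.cevianFoot_mem_of_forall_ne fun j hj ↦ ?_
    obtain rfl | rfl : j = i + 1 ∨ j = i + 2 := by decide +revert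
    exacts [left_mem_affineSpan_pair ℝ _ _, right_mem_affineSpan_pair ℝ _ _]
  have hcevian : cevianFoot m v i ∈ line P (v i) := by
    rw [h.cevianFoot_eq_lineMap]
    exact AffineMap.lineMap_mem_affineSpan_pair _ _ _
  exact mem_interT_of_not_collinear hPS (hvS i) (hvS _) (hvS _)
    (h.not_collinear_of_ne hv (by simp)) (hv.injective.ne (by simp)) hcevian hside

theorem insert_range_iteratedCevianFoot_subset_interT_iterate (h : IsPosBarycenter m v P)
    (hv : AffineIndependent ℝ v) (hS : insert P (range v) ⊆ S) (n : ℕ) :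
    insert P (range (iteratedCevianFoot m v n)) ⊆ interT^[n] S := by
  induction n with
  | zero => exact hS
  | succ n ih =>
    have hbary := h.iteratedCevianFoot n
    have hind := h.affineIndependent_iteratedCevianFoot hv n
    rw [Function.iterate_succ_apply']
    simp only [insert_subset_iff, range_subset_iff] at ih ⊢
    exact ⟨hbary.mem_interT hind ih.2 ih.1, hbary.cevianFoot_mem_interT hind ih.2 ih.1⟩

end IsPosBarycenter

end Plane

/-- Given noncollinear `A, B, C` and `P` strictly inside the triangle `ABC`, there are
sequences `Aₙ, Bₙ, Cₙ` of points generated from `{A, B, C, P}` by iterating `T`, all of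
whose triangles strictly contain `P`, with `Aₙ, Bₙ, Cₙ → P`. -/
theorem exists_nested_triangles (A B C P : ℝ × ℝ)
    (hABC : ¬ Collinear ℝ ({A, B, C} : Set (ℝ × ℝ)))
    (hP : P ∈ interior (convexHull ℝ ({A, B, C} : Set (ℝ × ℝ)))) :
    ∃ A' B' C' : ℕ → ℝ × ℝ,
      (∀ n, A' n ∈ ⋃ j, interT^[j] ({A, B, C, P} : Set (ℝ × ℝ))) ∧
      (∀ n, B' n ∈ ⋃ j, interT^[j] ({A, B, C, P} : Set (ℝ × ℝ))) ∧
      (∀ n, C' n ∈ ⋃ j, interT^[j] ({A, B, C, P} : Set (ℝ × ℝ))) ∧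
      (∀ n, P ∈ interior (convexHull ℝ ({A' n, B' n, C' n} : Set (ℝ × ℝ)))) ∧
      Tendsto A' atTop (nhds P) ∧ Tendsto B' atTop (nhds P) ∧ Tendsto C' atTop (nhds P) := by
  have range_eq (v : Fin 3 → ℝ × ℝ) : range v = {v 0, v 1, v 2} := by
    ext; simp [Fin.exists_fin_succ, eq_comm]
  have hcard : Fintype.card (Fin 3) = Module.finrank ℝ (ℝ × ℝ) + 1 := by simp
  have hv : AffineIndependent ℝ ![A, B, C] := affineIndependent_iff_not_collinear_set.2 hABC
  obtain ⟨m, hm⟩ : ∃ m, IsPosBarycenter m ![A, B, C] P :=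
    (mem_interior_convexHull_range_iff_exists_isPosBarycenter hv hcard).1 (by rwa [range_eq])
  have hS : insert P (range ![A, B, C]) ⊆ {A, B, C, P} := by simp [insert_subset_iff]
  have hgen (i : Fin 3) (n : ℕ) :
      iteratedCevianFoot m ![A, B, C] n i ∈ ⋃ j, interT^[j] {A, B, C, P} :=
    mem_iUnion_of_mem n <| hm.insert_range_iteratedCevianFoot_subset_interT_iterate hv hS n <|
      mem_insert_of_mem _ (mem_range_self i)
  have hlim (i : Fin 3) := hm.tendsto_iteratedCevianFoot (by simp) i
  refine ⟨_, _, _, hgen 0, hgen 1, hgen 2, fun n ↦ ?_, hlim 0, hlim 1, hlim 2⟩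
  rw [← range_eq, mem_interior_convexHull_range_iff_exists_isPosBarycenter
    (hm.affineIndependent_iteratedCevianFoot hv n) hcard]
  exact ⟨_, hm.iteratedCevianFoot n⟩
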